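/- arXiv:2204.03882 — 2 statements merged into one kernel-verified Lean document; each statement's English description precedes it below -/
import Mathlib

section
/- In the logic PL^S₁, the strong equivalence (A ≺ B) ⇔ₛ ¬(¬B ⊃ ¬A) is derivable for all formulae A and B; that is, co-implication behaves as negated contraposed implication. -/
/-!  Deep embedding of the many-sorted paraconsistent logic `PL^S₁`.

Formulae are built from atomic formulae (a predicate symbol applied to a list
of sorted individual variables) using implication `⊃`, conjunction `∧`,
disjunction `∨`, co-implication `≺` (`coimpl B A` denotes `B ≺ A`),
a primitive negation `¬`, and sorted quantifiers `∀`, `∃`.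
Each variable carries a fixed sort given by a map `sortOf : V → S`;
terms are just variables (no function symbols).  -/

inductive PLS1.Formula (S V P : Type) : Type
  | atom   : P → List V → PLS1.Formula S V P
  | impl   : PLS1.Formula S V P → PLS1.Formula S V P → PLS1.Formula S V P
  | conj   : PLS1.Formula S V P → PLS1.Formula S V P → PLS1.Formula S V P
  | disj   : PLS1.Formula S V P → PLS1.Formula S V P → PLS1.Formula S V P
  /-- `coimpl B A` is the co-implication `B ≺ A` (“`B` excludes `A`”). -/
  | coimpl : PLS1.Formula S V P → PLS1.Formula S V P → PLS1.Formula S V P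
  | neg    : PLS1.Formula S V P → PLS1.Formula S V P
  | all    : V → PLS1.Formula S V P → PLS1.Formula S V P
  | ex     : V → PLS1.Formula S V P → PLS1.Formula S V P

namespace PLS1

variable {S V P : Type} [DecidableEq V]

/-- Free variables of a formula. -/
def Formula.free : Formula S V P → Set V
  | .atom _ args => {v | v ∈ args}
  | .impl A B => A.free ∪ B.free
  | .conj A B => A.free ∪ B.free
  | .disj A B => A.free ∪ B.free
  | .coimpl A B => A.free ∪ B.free
  | .neg A => A.free
  | .all x A => A.free \ {x}
  | .ex x A => A.free \ {x}

/-- Bound variables of a formula. -/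
def Formula.bound : Formula S V P → Set V
  | .atom _ _ => ∅
  | .impl A B => A.bound ∪ B.bound
  | .conj A B => A.bound ∪ B.bound
  | .disj A B => A.bound ∪ B.bound
  | .coimpl A B => A.bound ∪ B.bound
  | .neg A => A.bound
  | .all x A => insert x A.bound
  | .ex x A => insert x A.bound

/-- `A.subst x y` replaces the free occurrences of the variable `x` by the
variable `y` in `A`. -/
def Formula.subst (x y : V) : Formula S V P → Formula S V P
  | .atom p args => .atom p (args.map fun v => if v = x then y else v)
  | .impl A B => .impl (A.subst x y) (B.subst x y)
  | .conj A B => .conj (A.subst x y) (B.subst x y)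
  | .disj A B => .disj (A.subst x y) (B.subst x y)
  | .coimpl A B => .coimpl (A.subst x y) (B.subst x y)
  | .neg A => .neg (A.subst x y)
  | .all z A => if z = x then .all z A else .all z (A.subst x y)
  | .ex z A => if z = x then .ex z A else .ex z (A.subst x y)

/-- Natural-deduction derivability `Γ ⊢ A` in `PL^S₁`.  The rules for
`⊃, ∧, ∨, ∀, ∃` are the intuitionistic ones; co-implication `B ≺ A` is
introduced from `¬A` and `B` and eliminated to `¬A` and to `B`; the primitive
negation is governed by introduction/elimination rules for the negation of
each connective: `¬(A⊃B)` has the rules of `A∧¬B`, `¬(A∧B)` those of `¬A∨¬B`,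
`¬(A∨B)` those of `¬A∧¬B`, `¬(B≺A)` those of `¬A⊃¬B`, `¬∀x A` those of
`∃x ¬A`, `¬∃x A` those of `∀x ¬A`, and `¬¬A` those of `A`. -/
inductive Deriv (sortOf : V → S) : Set (Formula S V P) → Formula S V P → Prop
  | ax {Γ A} : A ∈ Γ → Deriv sortOf Γ A
  -- implication
  | implI {Γ A B} : Deriv sortOf (insert A Γ) B → Deriv sortOf Γ (.impl A B)
  | implE {Γ A B} : Deriv sortOf Γ (.impl A B) → Deriv sortOf Γ A → Deriv sortOf Γ B
  -- conjunction
  | conjI {Γ A B} : Deriv sortOf Γ A → Deriv sortOf Γ B → Deriv sortOf Γ (.conj A B)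
  | conjE1 {Γ A B} : Deriv sortOf Γ (.conj A B) → Deriv sortOf Γ A
  | conjE2 {Γ A B} : Deriv sortOf Γ (.conj A B) → Deriv sortOf Γ B
  -- disjunction
  | disjI1 {Γ A B} : Deriv sortOf Γ A → Deriv sortOf Γ (.disj A B)
  | disjI2 {Γ A B} : Deriv sortOf Γ B → Deriv sortOf Γ (.disj A B)
  | disjE {Γ A B C} : Deriv sortOf Γ (.disj A B) → Deriv sortOf (insert A Γ) C →
      Deriv sortOf (insert B Γ) C → Deriv sortOf Γ C
  -- universal quantifier
  | allI {Γ x A} : Deriv sortOf Γ A → (∀ C ∈ Γ, x ∉ Formula.free C) →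
      Deriv sortOf Γ (.all x A)
  | allE {Γ x y A} : Deriv sortOf Γ (.all x A) → sortOf y = sortOf x →
      y ∉ Formula.bound A → Deriv sortOf Γ (A.subst x y)
  -- existential quantifier
  | exI {Γ x y A} : Deriv sortOf Γ (A.subst x y) → sortOf y = sortOf x →
      y ∉ Formula.bound A → Deriv sortOf Γ (.ex x A)
  | exE {Γ x A C} : Deriv sortOf Γ (.ex x A) → Deriv sortOf (insert A Γ) C →
      (∀ D ∈ Γ, x ∉ Formula.free D) → x ∉ Formula.free C → Deriv sortOf Γ C
  -- co-implication
  | coimplI {Γ A B} : Deriv sortOf Γ (.neg A) → Deriv sortOf Γ B →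
      Deriv sortOf Γ (.coimpl B A)
  | coimplE1 {Γ A B} : Deriv sortOf Γ (.coimpl B A) → Deriv sortOf Γ (.neg A)
  | coimplE2 {Γ A B} : Deriv sortOf Γ (.coimpl B A) → Deriv sortOf Γ B
  -- negated implication (rules of `A ∧ ¬B`)
  | negImplI {Γ A B} : Deriv sortOf Γ A → Deriv sortOf Γ (.neg B) →
      Deriv sortOf Γ (.neg (.impl A B))
  | negImplE1 {Γ A B} : Deriv sortOf Γ (.neg (.impl A B)) → Deriv sortOf Γ A
  | negImplE2 {Γ A B} : Deriv sortOf Γ (.neg (.impl A B)) → Deriv sortOf Γ (.neg B)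
  -- negated conjunction (rules of `¬A ∨ ¬B`)
  | negConjI1 {Γ A B} : Deriv sortOf Γ (.neg A) → Deriv sortOf Γ (.neg (.conj A B))
  | negConjI2 {Γ A B} : Deriv sortOf Γ (.neg B) → Deriv sortOf Γ (.neg (.conj A B))
  | negConjE {Γ A B C} : Deriv sortOf Γ (.neg (.conj A B)) →
      Deriv sortOf (insert (.neg A) Γ) C → Deriv sortOf (insert (.neg B) Γ) C →
      Deriv sortOf Γ C
  -- negated disjunction (rules of `¬A ∧ ¬B`)
  | negDisjI {Γ A B} : Deriv sortOf Γ (.neg A) → Deriv sortOf Γ (.neg B) →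
      Deriv sortOf Γ (.neg (.disj A B))
  | negDisjE1 {Γ A B} : Deriv sortOf Γ (.neg (.disj A B)) → Deriv sortOf Γ (.neg A)
  | negDisjE2 {Γ A B} : Deriv sortOf Γ (.neg (.disj A B)) → Deriv sortOf Γ (.neg B)
  -- negated co-implication (rules of `¬A ⊃ ¬B`)
  | negCoimplI {Γ A B} : Deriv sortOf (insert (.neg A) Γ) (.neg B) →
      Deriv sortOf Γ (.neg (.coimpl B A))
  | negCoimplE {Γ A B} : Deriv sortOf Γ (.neg (.coimpl B A)) →
      Deriv sortOf Γ (.neg A) → Deriv sortOf Γ (.neg B)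
  -- negated universal (rules of `∃x ¬A`)
  | negAllI {Γ x y A} : Deriv sortOf Γ (.neg (A.subst x y)) → sortOf y = sortOf x →
      y ∉ Formula.bound A → Deriv sortOf Γ (.neg (.all x A))
  | negAllE {Γ x A C} : Deriv sortOf Γ (.neg (.all x A)) →
      Deriv sortOf (insert (.neg A) Γ) C → (∀ D ∈ Γ, x ∉ Formula.free D) →
      x ∉ Formula.free C → Deriv sortOf Γ C
  -- negated existential (rules of `∀x ¬A`)
  | negExI {Γ x A} : Deriv sortOf Γ (.neg A) → (∀ C ∈ Γ, x ∉ Formula.free C) →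
      Deriv sortOf Γ (.neg (.ex x A))
  | negExE {Γ x y A} : Deriv sortOf Γ (.neg (.ex x A)) → sortOf y = sortOf x →
      y ∉ Formula.bound A → Deriv sortOf Γ (.neg (A.subst x y))
  -- double negation (rules of `A`)
  | negNegI {Γ A} : Deriv sortOf Γ A → Deriv sortOf Γ (.neg (.neg A))
  | negNegE {Γ A} : Deriv sortOf Γ (.neg (.neg A)) → Deriv sortOf Γ A

/-- Equivalence: `A ⇔ B := (A ⊃ B) ∧ (B ⊃ A)`. -/
def Formula.equiv (A B : Formula S V P) : Formula S V P :=
  .conj (.impl A B) (.impl B A)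

/-- Strong equivalence: `A ⇔ₛ B := (A ⇔ B) ∧ (¬A ⇔ ¬B)`. -/
def Formula.sequiv (A B : Formula S V P) : Formula S V P :=
  .conj (A.equiv B) ((Formula.neg A).equiv (Formula.neg B))

/-- `SubstOcc A B C C'` holds when `C'` is the result of substituting some
(possibly zero, possibly not all) occurrences of `A` by `B` in `C`. -/
inductive SubstOcc (A B : Formula S V P) : Formula S V P → Formula S V P → Prop
  | keep (C) : SubstOcc A B C C
  | replace : SubstOcc A B A B
  | impl {C₁ C₁' C₂ C₂'} : SubstOcc A B C₁ C₁' → SubstOcc A B C₂ C₂' →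
      SubstOcc A B (.impl C₁ C₂) (.impl C₁' C₂')
  | conj {C₁ C₁' C₂ C₂'} : SubstOcc A B C₁ C₁' → SubstOcc A B C₂ C₂' →
      SubstOcc A B (.conj C₁ C₂) (.conj C₁' C₂')
  | disj {C₁ C₁' C₂ C₂'} : SubstOcc A B C₁ C₁' → SubstOcc A B C₂ C₂' →
      SubstOcc A B (.disj C₁ C₂) (.disj C₁' C₂')
  | coimpl {C₁ C₁' C₂ C₂'} : SubstOcc A B C₁ C₁' → SubstOcc A B C₂ C₂' →
      SubstOcc A B (.coimpl C₁ C₂) (.coimpl C₁' C₂')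
  | neg {C C'} : SubstOcc A B C C' → SubstOcc A B (.neg C) (.neg C')
  | all {x C C'} : SubstOcc A B C C' → SubstOcc A B (.all x C) (.all x C')
  | ex {x C C'} : SubstOcc A B C C' → SubstOcc A B (.ex x C) (.ex x C')

/-- `A` and `B` are inter-substitutable (`A ≜ B`): for every formula `C`,
if `C'` results from substituting some occurrences of `A` by `B`
(or vice versa) in `C`, then `C ⊢ C'` and `C' ⊢ C`. -/
def InterSubst (sortOf : V → S) (A B : Formula S V P) : Prop :=
  ∀ C C' : Formula S V P, (SubstOcc A B C C' ∨ SubstOcc B A C C') →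
    Deriv sortOf {C} C' ∧ Deriv sortOf {C'} C

end PLS1

namespace PLS1

namespace Deriv

variable {S V P : Type} [DecidableEq V] {sortOf : V → S}
  {Γ : Set (Formula S V P)} {A B : Formula S V P}

theorem ax_insert : Deriv sortOf (insert A Γ) A :=
  .ax (Set.mem_insert A Γ)

theorem equivI (hAB : Deriv sortOf (insert A Γ) B) (hBA : Deriv sortOf (insert B Γ) A) :
    Deriv sortOf Γ (A.equiv B) :=
  .conjI (.implI hAB) (.implI hBA)

theorem coimpl_iff_neg_contrapose :
    Deriv sortOf Γ (.coimpl A B) ↔ Deriv sortOf Γ (.neg (.impl (.neg B) (.neg A))) where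
  mp h := .negImplI h.coimplE1 h.coimplE2.negNegI
  mpr h := .coimplI h.negImplE1 h.negImplE2.negNegE

/- The next two lemmas assume membership in `Γ`, not derivability from it: their proofs discharge
`¬B`, and weakening by `¬B` could break the variable conditions of the quantifier rules. -/

theorem contrapose_of_neg_coimpl_mem (h : .neg (.coimpl A B) ∈ Γ) :
    Deriv sortOf Γ (.impl (.neg B) (.neg A)) :=
  .implI (.negCoimplE (.ax (Set.mem_insert_of_mem _ h)) ax_insert)

theorem neg_coimpl_of_neg_neg_contrapose_mem
    (h : .neg (.neg (.impl (.neg B) (.neg A))) ∈ Γ) :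
    Deriv sortOf Γ (.neg (.coimpl A B)) :=
  have contrapose : Deriv sortOf (insert (.neg B) Γ) (.impl (.neg B) (.neg A)) :=
    .negNegE (.ax (Set.mem_insert_of_mem _ h))
  .negCoimplI (.implE contrapose ax_insert)

theorem coimpl_equiv_neg_contrapose :
    Deriv sortOf Γ ((Formula.coimpl A B).equiv (.neg (.impl (.neg B) (.neg A)))) :=
  equivI (coimpl_iff_neg_contrapose.mp ax_insert) (coimpl_iff_neg_contrapose.mpr ax_insert)

theorem neg_coimpl_equiv_neg_neg_contrapose :
    Deriv sortOf Γ
      ((Formula.neg (.coimpl A B)).equiv (.neg (.neg (.impl (.neg B) (.neg A))))) :=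
  equivI (contrapose_of_neg_coimpl_mem (Set.mem_insert _ Γ)).negNegI
    (neg_coimpl_of_neg_neg_contrapose_mem (Set.mem_insert _ Γ))

end Deriv

theorem coimpl_sequiv_neg_contrapose_general {S V P : Type} [DecidableEq V]
    (sortOf : V → S) (Γ : Set (Formula S V P)) (A B : Formula S V P) :
    Deriv sortOf Γ
      ((Formula.coimpl A B).sequiv (.neg (.impl (.neg B) (.neg A)))) :=
  .conjI .coimpl_equiv_neg_contrapose .neg_coimpl_equiv_neg_neg_contrapose

end PLS1

open PLS1 in
/-- In `PL^S₁`, the strong equivalence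
`(A ≺ B) ⇔ₛ ¬(¬B ⊃ ¬A)` is derivable for all formulae `A` and `B`; that is,
co-implication behaves as negated contraposed implication
(recall `coimpl A B` denotes `A ≺ B`). -/
theorem PLS1.coimpl_sequiv_neg_contrapose {S V P : Type} [DecidableEq V]
    (sortOf : V → S) (A B : Formula S V P) :
    Deriv sortOf ∅
      ((Formula.coimpl A B).sequiv (.neg (.impl (.neg B) (.neg A)))) := by
  exact coimpl_sequiv_neg_contrapose_general sortOf ∅ A B
end

section
/- Every small type of PTT₁ is judgementally equal (in U₀) to a type in opposite normal form, i.e. to a type in which the opposite constructor ¬ is only applied to type variables. -/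
/-!  Deep embedding of the paraconsistent type theory `PTT₁`.

`PTT₁` extends the `→, ×, +, Π, Σ` intensional fragment of Martin-Löf type
theory with, for each small type `A`, an opposite type `¬A` (`Ty.opp A`) and,
for small types `A`, `B`, a co-function type `B ⤙ A` (`Ty.cofn B A`).

Terms `Tm` are the usual (Curry-style) Martin-Löf term constructors.
Small types (the types of universe `U₀`) `Ty` are generated from a
denumerable family of (possibly dependent) basic type variables
`Ty.tvar n ts` (the basic type variable `αₙ` applied to individual terms
`ts`), closed under `→, ×, +, Π, Σ, ⤙, ¬`.  Variables are natural numbers. -/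

namespace PTT1

/-- Terms of `PTT₁` (Curry-style). -/
inductive Tm : Type
  | var  : ℕ → Tm
  | lam  : ℕ → Tm → Tm
  | app  : Tm → Tm → Tm
  | pair : Tm → Tm → Tm
  | fst  : Tm → Tm
  | snd  : Tm → Tm
  | inl  : Tm → Tm
  | inr  : Tm → Tm
  /-- `case t x u y v` is `D(t, (x)u, (y)v)`, the case analysis on `t`. -/
  | case : Tm → ℕ → Tm → ℕ → Tm → Tm

/-- Substitution of the term `a` for the variable `x` in a term. -/
def Tm.subst (x : ℕ) (a : Tm) : Tm → Tm
  | .var y => if y = x then a else .var y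
  | .lam y b => if y = x then .lam y b else .lam y (Tm.subst x a b)
  | .app f t => .app (Tm.subst x a f) (Tm.subst x a t)
  | .pair s t => .pair (Tm.subst x a s) (Tm.subst x a t)
  | .fst t => .fst (Tm.subst x a t)
  | .snd t => .snd (Tm.subst x a t)
  | .inl t => .inl (Tm.subst x a t)
  | .inr t => .inr (Tm.subst x a t)
  | .case t y u z v =>
      .case (Tm.subst x a t) y (if y = x then u else Tm.subst x a u)
        z (if z = x then v else Tm.subst x a v)

/-- The set of (individual) variables occurring in a term. -/
def Tm.vars : Tm → Set ℕ
  | .var y => {y}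
  | .lam y b => insert y b.vars
  | .app f t => f.vars ∪ t.vars
  | .pair s t => s.vars ∪ t.vars
  | .fst t => t.vars
  | .snd t => t.vars
  | .inl t => t.vars
  | .inr t => t.vars
  | .case t y u z v => t.vars ∪ insert y u.vars ∪ insert z v.vars

/-- Small types of `PTT₁` (the types of the universe `U₀`). -/
inductive Ty : Type
  /-- `tvar n ts` is the basic type variable `αₙ` (representing an arbitrary,
  possibly dependent, basic type) applied to the individual terms `ts`. -/
  | tvar  : ℕ → List Tm → Ty
  | arrow : Ty → Ty → Ty
  | prod  : Ty → Ty → Ty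
  | sum   : Ty → Ty → Ty
  /-- `cofn B A` is the co-function type `B ⤙ A`. -/
  | cofn  : Ty → Ty → Ty
  /-- `pi x A B` is `Π x:A. B`; `A` is the generating type. -/
  | pi    : ℕ → Ty → Ty → Ty
  /-- `sigma x A B` is `Σ x:A. B`; `A` is the generating type. -/
  | sigma : ℕ → Ty → Ty → Ty
  /-- `opp A` is the opposite type `¬A`. -/
  | opp   : Ty → Ty

/-- Substitution of the term `a` for the individual variable `x` in a type. -/
def Ty.subst (x : ℕ) (a : Tm) : Ty → Ty
  | .tvar n ts => .tvar n (ts.map (Tm.subst x a))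
  | .arrow A B => .arrow (Ty.subst x a A) (Ty.subst x a B)
  | .prod A B => .prod (Ty.subst x a A) (Ty.subst x a B)
  | .sum A B => .sum (Ty.subst x a A) (Ty.subst x a B)
  | .cofn B A => .cofn (Ty.subst x a B) (Ty.subst x a A)
  | .pi y A B => .pi y (Ty.subst x a A) (if y = x then B else Ty.subst x a B)
  | .sigma y A B => .sigma y (Ty.subst x a A) (if y = x then B else Ty.subst x a B)
  | .opp A => .opp (Ty.subst x a A)

/-- The set of individual variables occurring in a type. -/
def Ty.vars : Ty → Set ℕ
  | .tvar _ ts => ts.foldr (fun t s => t.vars ∪ s) ∅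
  | .arrow A B => A.vars ∪ B.vars
  | .prod A B => A.vars ∪ B.vars
  | .sum A B => A.vars ∪ B.vars
  | .cofn B A => B.vars ∪ A.vars
  | .pi y A B => insert y (A.vars ∪ B.vars)
  | .sigma y A B => insert y (A.vars ∪ B.vars)
  | .opp A => A.vars

/-- Term conversion: beta, eta and co-eta computation rules together with
reflexivity, symmetry, transitivity and congruence. -/
inductive TmEq : Tm → Tm → Prop
  | refl (t) : TmEq t t
  | symm {s t} : TmEq s t → TmEq t s
  | trans {s t u} : TmEq s t → TmEq t u → TmEq s u
  -- beta-style computation rules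
  | beta {x b a} : TmEq (.app (.lam x b) a) (b.subst x a)
  | fstPair {a b} : TmEq (.fst (.pair a b)) a
  | sndPair {a b} : TmEq (.snd (.pair a b)) b
  | caseInl {a y u z v} : TmEq (.case (.inl a) y u z v) (u.subst y a)
  | caseInr {a y u z v} : TmEq (.case (.inr a) y u z v) (v.subst z a)
  -- eta rules
  | etaLam {x t} : x ∉ t.vars → TmEq (.lam x (.app t (.var x))) t
  | etaPair {t} : TmEq (.pair (.fst t) (.snd t)) t
  -- co-eta rule
  | coEtaCase {t y z} : TmEq (.case t y (.inl (.var y)) z (.inr (.var z))) t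
  -- congruence
  | congLam {x b b'} : TmEq b b' → TmEq (.lam x b) (.lam x b')
  | congApp {f f' a a'} : TmEq f f' → TmEq a a' → TmEq (.app f a) (.app f' a')
  | congPair {a a' b b'} : TmEq a a' → TmEq b b' → TmEq (.pair a b) (.pair a' b')
  | congFst {t t'} : TmEq t t' → TmEq (.fst t) (.fst t')
  | congSnd {t t'} : TmEq t t' → TmEq (.snd t) (.snd t')
  | congInl {t t'} : TmEq t t' → TmEq (.inl t) (.inl t')
  | congInr {t t'} : TmEq t t' → TmEq (.inr t) (.inr t')
  | congCase {t t' y u u' z v v'} : TmEq t t' → TmEq u u' → TmEq v v' →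
      TmEq (.case t y u z v) (.case t' y u' z v')

/-- Judgemental equality of small types in `U₀` (`⊢ A = B : U₀`), generated by
the equality rules for the opposite type constructor together with
reflexivity, symmetry, transitivity and congruence. -/
inductive TyEq : Ty → Ty → Prop
  | refl (A) : TyEq A A
  | symm {A B} : TyEq A B → TyEq B A
  | trans {A B C} : TyEq A B → TyEq B C → TyEq A C
  -- equality rules for the opposite type constructor
  | oppArrow {A B} : TyEq (.opp (.arrow A B)) (.cofn (.opp B) (.opp A))
  | oppCofn {A B} : TyEq (.opp (.cofn B A)) (.arrow (.opp A) (.opp B))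
  | oppProd {A B} : TyEq (.opp (.prod A B)) (.sum (.opp A) (.opp B))
  | oppSum {A B} : TyEq (.opp (.sum A B)) (.prod (.opp A) (.opp B))
  | oppPi {x A B} : TyEq (.opp (.pi x A B)) (.sigma x A (.opp B))
  | oppSigma {x A B} : TyEq (.opp (.sigma x A B)) (.pi x A (.opp B))
  | oppOpp {A} : TyEq (.opp (.opp A)) A
  -- congruence
  | congArrow {A A' B B'} : TyEq A A' → TyEq B B' → TyEq (.arrow A B) (.arrow A' B')
  | congProd {A A' B B'} : TyEq A A' → TyEq B B' → TyEq (.prod A B) (.prod A' B')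
  | congSum {A A' B B'} : TyEq A A' → TyEq B B' → TyEq (.sum A B) (.sum A' B')
  | congCofn {A A' B B'} : TyEq B B' → TyEq A A' → TyEq (.cofn B A) (.cofn B' A')
  | congPi {x A A' B B'} : TyEq A A' → TyEq B B' → TyEq (.pi x A B) (.pi x A' B')
  | congSigma {x A A' B B'} : TyEq A A' → TyEq B B' → TyEq (.sigma x A B) (.sigma x A' B')
  | congOpp {A A'} : TyEq A A' → TyEq (.opp A) (.opp A')

/-- Contexts: lists of typed variable declarations (most recent first). -/
abbrev Ctx := List (ℕ × Ty)

/-- `x` is fresh for the context `Γ`. -/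
def Fresh (x : ℕ) (Γ : Ctx) : Prop :=
  ∀ p ∈ Γ, x ≠ p.1 ∧ x ∉ Ty.vars p.2

/-- The typing judgement `Γ ⊢ t : A` of `PTT₁`.  It comprises the usual rules
for `→, ×, +, Π, Σ`, the rules for co-function types (`B ⤙ A` behaves as
`¬A × B`), the introduction/elimination rules for opposite types
(`¬(A→B)` behaves as `A×¬B`, `¬(A×B)` as `¬A+¬B`, `¬(A+B)` as `¬A×¬B`,
`¬(Πx:A.B)` as `Σx:A.¬B`, `¬(Σx:A.B)` as `Πx:A.¬B`, `¬(B⤙A)` as `¬A→¬B`,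
`¬¬A` as `A`), and conversion under term equality (including the eta and
co-eta rules) and under judgemental type equality. -/
inductive HasType : Ctx → Tm → Ty → Prop
  | var {Γ x A} : (x, A) ∈ Γ → HasType Γ (.var x) A
  -- function types
  | arrowI {Γ x A b B} : Fresh x Γ → HasType ((x, A) :: Γ) b B →
      HasType Γ (.lam x b) (.arrow A B)
  | arrowE {Γ f a A B} : HasType Γ f (.arrow A B) → HasType Γ a A →
      HasType Γ (.app f a) B
  -- product types
  | prodI {Γ a b A B} : HasType Γ a A → HasType Γ b B →
      HasType Γ (.pair a b) (.prod A B)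
  | prodE1 {Γ p A B} : HasType Γ p (.prod A B) → HasType Γ (.fst p) A
  | prodE2 {Γ p A B} : HasType Γ p (.prod A B) → HasType Γ (.snd p) B
  -- sum types
  | sumI1 {Γ a A B} : HasType Γ a A → HasType Γ (.inl a) (.sum A B)
  | sumI2 {Γ b A B} : HasType Γ b B → HasType Γ (.inr b) (.sum A B)
  | sumE {Γ t x u y v A B C} : Fresh x Γ → Fresh y Γ →
      HasType Γ t (.sum A B) → HasType ((x, A) :: Γ) u C →
      HasType ((y, B) :: Γ) v C → HasType Γ (.case t x u y v) C
  -- Pi types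
  | piI {Γ x A b B} : Fresh x Γ → HasType ((x, A) :: Γ) b B →
      HasType Γ (.lam x b) (.pi x A B)
  | piE {Γ f a x A B} : HasType Γ f (.pi x A B) → HasType Γ a A →
      HasType Γ (.app f a) (B.subst x a)
  -- Sigma types
  | sigmaI {Γ a b x A B} : HasType Γ a A → HasType Γ b (B.subst x a) →
      HasType Γ (.pair a b) (.sigma x A B)
  | sigmaE1 {Γ p x A B} : HasType Γ p (.sigma x A B) → HasType Γ (.fst p) A
  | sigmaE2 {Γ p x A B} : HasType Γ p (.sigma x A B) →
      HasType Γ (.snd p) (B.subst x (.fst p))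
  -- co-function types (`B ⤙ A` behaves as `¬A × B`)
  | cofnI {Γ a b A B} : HasType Γ a (.opp A) → HasType Γ b B →
      HasType Γ (.pair a b) (.cofn B A)
  | cofnE1 {Γ p A B} : HasType Γ p (.cofn B A) → HasType Γ (.fst p) (.opp A)
  | cofnE2 {Γ p A B} : HasType Γ p (.cofn B A) → HasType Γ (.snd p) B
  -- opposites of function types (`¬(A→B)` behaves as `A × ¬B`)
  | oppArrowI {Γ a b A B} : HasType Γ a A → HasType Γ b (.opp B) →
      HasType Γ (.pair a b) (.opp (.arrow A B))
  | oppArrowE1 {Γ p A B} : HasType Γ p (.opp (.arrow A B)) → HasType Γ (.fst p) A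
  | oppArrowE2 {Γ p A B} : HasType Γ p (.opp (.arrow A B)) →
      HasType Γ (.snd p) (.opp B)
  -- opposites of product types (`¬(A×B)` behaves as `¬A + ¬B`)
  | oppProdI1 {Γ a A B} : HasType Γ a (.opp A) → HasType Γ (.inl a) (.opp (.prod A B))
  | oppProdI2 {Γ b A B} : HasType Γ b (.opp B) → HasType Γ (.inr b) (.opp (.prod A B))
  | oppProdE {Γ t x u y v A B C} : Fresh x Γ → Fresh y Γ →
      HasType Γ t (.opp (.prod A B)) → HasType ((x, .opp A) :: Γ) u C →
      HasType ((y, .opp B) :: Γ) v C → HasType Γ (.case t x u y v) C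
  -- opposites of sum types (`¬(A+B)` behaves as `¬A × ¬B`)
  | oppSumI {Γ a b A B} : HasType Γ a (.opp A) → HasType Γ b (.opp B) →
      HasType Γ (.pair a b) (.opp (.sum A B))
  | oppSumE1 {Γ p A B} : HasType Γ p (.opp (.sum A B)) → HasType Γ (.fst p) (.opp A)
  | oppSumE2 {Γ p A B} : HasType Γ p (.opp (.sum A B)) → HasType Γ (.snd p) (.opp B)
  -- opposites of Pi types (`¬(Πx:A.B)` behaves as `Σx:A.¬B`)
  | oppPiI {Γ a b x A B} : HasType Γ a A → HasType Γ b (.opp (B.subst x a)) →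
      HasType Γ (.pair a b) (.opp (.pi x A B))
  | oppPiE1 {Γ p x A B} : HasType Γ p (.opp (.pi x A B)) → HasType Γ (.fst p) A
  | oppPiE2 {Γ p x A B} : HasType Γ p (.opp (.pi x A B)) →
      HasType Γ (.snd p) (.opp (B.subst x (.fst p)))
  -- opposites of Sigma types (`¬(Σx:A.B)` behaves as `Πx:A.¬B`)
  | oppSigmaI {Γ x A b B} : Fresh x Γ → HasType ((x, A) :: Γ) b (.opp B) →
      HasType Γ (.lam x b) (.opp (.sigma x A B))
  | oppSigmaE {Γ f a x A B} : HasType Γ f (.opp (.sigma x A B)) → HasType Γ a A →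
      HasType Γ (.app f a) (.opp (B.subst x a))
  -- opposites of co-function types (`¬(B⤙A)` behaves as `¬A → ¬B`)
  | oppCofnI {Γ x A b B} : Fresh x Γ → HasType ((x, .opp A) :: Γ) b (.opp B) →
      HasType Γ (.lam x b) (.opp (.cofn B A))
  | oppCofnE {Γ f a A B} : HasType Γ f (.opp (.cofn B A)) → HasType Γ a (.opp A) →
      HasType Γ (.app f a) (.opp B)
  -- opposites of opposite types (`¬¬A` behaves as `A`)
  | oppOppI {Γ a A} : HasType Γ a A → HasType Γ a (.opp (.opp A))
  | oppOppE {Γ a A} : HasType Γ a (.opp (.opp A)) → HasType Γ a A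
  -- conversion
  | convTm {Γ t t' A} : HasType Γ t A → TmEq t t' → HasType Γ t' A
  | convTy {Γ t A B} : HasType Γ t A → TyEq A B → HasType Γ t B

/-- Equivalence of small types in `U₀` (`A ≡ B`): for every context `Γ` and
every term `t`, `Γ ⊢ t : A` iff `Γ ⊢ t : B`. -/
def TyEquiv (A B : Ty) : Prop :=
  ∀ (Γ : Ctx) (t : Tm), HasType Γ t A ↔ HasType Γ t B

/-- Strong equivalence of small types (`A ≡ₛ B`): `A ≡ B` and `¬A ≡ ¬B`. -/
def TyStrongEquiv (A B : Ty) : Prop :=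
  TyEquiv A B ∧ TyEquiv (.opp A) (.opp B)

/-- `SubstOcc A B C C'` holds when the type `C'` is the result of substituting
some (possibly zero, possibly not all) occurrences of `A` by `B` in `C`. -/
inductive SubstOcc (A B : Ty) : Ty → Ty → Prop
  | keep (C) : SubstOcc A B C C
  | replace : SubstOcc A B A B
  | arrow {C₁ C₁' C₂ C₂'} : SubstOcc A B C₁ C₁' → SubstOcc A B C₂ C₂' →
      SubstOcc A B (.arrow C₁ C₂) (.arrow C₁' C₂')
  | prod {C₁ C₁' C₂ C₂'} : SubstOcc A B C₁ C₁' → SubstOcc A B C₂ C₂' →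
      SubstOcc A B (.prod C₁ C₂) (.prod C₁' C₂')
  | sum {C₁ C₁' C₂ C₂'} : SubstOcc A B C₁ C₁' → SubstOcc A B C₂ C₂' →
      SubstOcc A B (.sum C₁ C₂) (.sum C₁' C₂')
  | cofn {C₁ C₁' C₂ C₂'} : SubstOcc A B C₁ C₁' → SubstOcc A B C₂ C₂' →
      SubstOcc A B (.cofn C₁ C₂) (.cofn C₁' C₂')
  | pi {x C₁ C₁' C₂ C₂'} : SubstOcc A B C₁ C₁' → SubstOcc A B C₂ C₂' →
      SubstOcc A B (.pi x C₁ C₂) (.pi x C₁' C₂')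
  | sigma {x C₁ C₁' C₂ C₂'} : SubstOcc A B C₁ C₁' → SubstOcc A B C₂ C₂' →
      SubstOcc A B (.sigma x C₁ C₂) (.sigma x C₁' C₂')
  | opp {C C'} : SubstOcc A B C C' → SubstOcc A B (.opp C) (.opp C')

/-- `A` and `B` are inter-substitutable in `U₀`: for every small type `C`,
when `C'` is the result of substituting some occurrences of `A` by `B`
(or vice versa) in `C`, then `x : C ⊢ x : C'` and `x : C' ⊢ x : C` for every
variable `x` not occurring in `C`. -/
def InterSubst (A B : Ty) : Prop :=
  ∀ C C' : Ty, (SubstOcc A B C C' ∨ SubstOcc B A C C') →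
    ∀ x : ℕ, x ∉ C.vars →
      HasType [(x, C)] (.var x) C' ∧ HasType [(x, C')] (.var x) C

end PTT1

namespace PTT1

/-- A type is in *opposite normal form* if the opposite constructor `¬` is
only applied to type variables in it. -/
def Ty.OppNormal : Ty → Prop
  | .tvar _ _ => True
  | .arrow A B => Ty.OppNormal A ∧ Ty.OppNormal B
  | .prod A B => Ty.OppNormal A ∧ Ty.OppNormal B
  | .sum A B => Ty.OppNormal A ∧ Ty.OppNormal B
  | .cofn B A => Ty.OppNormal B ∧ Ty.OppNormal A
  | .pi _ A B => Ty.OppNormal A ∧ Ty.OppNormal B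
  | .sigma _ A B => Ty.OppNormal A ∧ Ty.OppNormal B
  | .opp (.tvar _ _) => True
  | .opp _ => False

end PTT1

namespace PTT1

/-- The De Morgan dual of a small type: a type judgementally equal to `¬A`, obtained by pushing the
opposite constructor through every other constructor. It stops at the first `¬` it meets, which it
cancels, and it leaves the generating type of `Π` and `Σ` unchanged. -/
def Ty.dual : Ty → Ty
  | .tvar n ts => .opp (.tvar n ts)
  | .arrow A B => .cofn B.dual A.dual
  | .prod A B => .sum A.dual B.dual
  | .sum A B => .prod A.dual B.dual
  | .cofn B A => .arrow A.dual B.dual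
  | .pi x A B => .sigma x A B.dual
  | .sigma x A B => .pi x A B.dual
  | .opp A => A

theorem Ty.tyEq_opp_dual : ∀ A : Ty, TyEq (.opp A) A.dual
  | .tvar _ _ => .refl _
  | .arrow A B => .trans .oppArrow (.congCofn B.tyEq_opp_dual A.tyEq_opp_dual)
  | .prod A B => .trans .oppProd (.congSum A.tyEq_opp_dual B.tyEq_opp_dual)
  | .sum A B => .trans .oppSum (.congProd A.tyEq_opp_dual B.tyEq_opp_dual)
  | .cofn B A => .trans .oppCofn (.congArrow A.tyEq_opp_dual B.tyEq_opp_dual)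
  | .pi _ A B => .trans .oppPi (.congSigma (.refl A) B.tyEq_opp_dual)
  | .sigma _ A B => .trans .oppSigma (.congPi (.refl A) B.tyEq_opp_dual)
  | .opp _ => .oppOpp

theorem Ty.OppNormal.dual : ∀ {A : Ty}, A.OppNormal → A.dual.OppNormal
  | .tvar _ _, _ => trivial
  | .arrow _ _, ⟨hA, hB⟩ => ⟨hB.dual, hA.dual⟩
  | .prod _ _, ⟨hA, hB⟩ => ⟨hA.dual, hB.dual⟩
  | .sum _ _, ⟨hA, hB⟩ => ⟨hA.dual, hB.dual⟩
  | .cofn _ _, ⟨hB, hA⟩ => ⟨hA.dual, hB.dual⟩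
  | .pi _ _ _, ⟨hA, hB⟩ => ⟨hA, hB.dual⟩
  | .sigma _ _ _, ⟨hA, hB⟩ => ⟨hA, hB.dual⟩
  | .opp (.tvar _ _), _ => trivial

/-- The opposite normal form of a small type, computed from the inside out: each `¬` is replaced by
the De Morgan dual of the normal form of its argument. -/
def Ty.oppNormalForm : Ty → Ty
  | .tvar n ts => .tvar n ts
  | .arrow A B => .arrow A.oppNormalForm B.oppNormalForm
  | .prod A B => .prod A.oppNormalForm B.oppNormalForm
  | .sum A B => .sum A.oppNormalForm B.oppNormalForm
  | .cofn B A => .cofn B.oppNormalForm A.oppNormalForm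
  | .pi x A B => .pi x A.oppNormalForm B.oppNormalForm
  | .sigma x A B => .sigma x A.oppNormalForm B.oppNormalForm
  | .opp A => A.oppNormalForm.dual

theorem Ty.oppNormal_oppNormalForm : ∀ A : Ty, A.oppNormalForm.OppNormal
  | .tvar _ _ => trivial
  | .arrow A B => ⟨A.oppNormal_oppNormalForm, B.oppNormal_oppNormalForm⟩
  | .prod A B => ⟨A.oppNormal_oppNormalForm, B.oppNormal_oppNormalForm⟩
  | .sum A B => ⟨A.oppNormal_oppNormalForm, B.oppNormal_oppNormalForm⟩
  | .cofn B A => ⟨B.oppNormal_oppNormalForm, A.oppNormal_oppNormalForm⟩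
  | .pi _ A B => ⟨A.oppNormal_oppNormalForm, B.oppNormal_oppNormalForm⟩
  | .sigma _ A B => ⟨A.oppNormal_oppNormalForm, B.oppNormal_oppNormalForm⟩
  | .opp A => A.oppNormal_oppNormalForm.dual

theorem Ty.tyEq_oppNormalForm : ∀ A : Ty, TyEq A A.oppNormalForm
  | .tvar _ _ => .refl _
  | .arrow A B => .congArrow A.tyEq_oppNormalForm B.tyEq_oppNormalForm
  | .prod A B => .congProd A.tyEq_oppNormalForm B.tyEq_oppNormalForm
  | .sum A B => .congSum A.tyEq_oppNormalForm B.tyEq_oppNormalForm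
  | .cofn B A => .congCofn B.tyEq_oppNormalForm A.tyEq_oppNormalForm
  | .pi _ A B => .congPi A.tyEq_oppNormalForm B.tyEq_oppNormalForm
  | .sigma _ A B => .congSigma A.tyEq_oppNormalForm B.tyEq_oppNormalForm
  | .opp A => .trans (.congOpp A.tyEq_oppNormalForm) A.oppNormalForm.tyEq_opp_dual

end PTT1

open PTT1 in
/-- Every small type of `PTT₁` is judgementally equal (in
`U₀`) to a type in opposite normal form, i.e. to a type in which the opposite
constructor `¬` is only applied to type variables. -/
theorem PTT1.exists_oppNormal_tyEq (A : Ty) :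
    ∃ B : Ty, Ty.OppNormal B ∧ TyEq A B :=
  ⟨A.oppNormalForm, A.oppNormal_oppNormalForm, A.tyEq_oppNormalForm⟩
end
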